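/- arXiv:1003.4954 — 2 statements merged into one kernel-verified Lean document; each statement's English description precedes it below -/
import Mathlib

section
/- Let ω be a nonzero complex number and suppose that the sequence (ω^{n²})_{n∈ℕ} is holonomic, i.e., there exist an integer d ≥ 0 and polynomials c_0, …, c_d ∈ ℂ[x] with c_d ≠ 0 such that c_d(n)·ω^{(n+d)²} + ⋯ + c_0(n)·ω^{n²} = 0 for all n ∈ ℕ. Then ω is a root of unity, i.e., ω^m = 1 for some integer m ≥ 1. -/
/-!
Dividing the recurrence for `ω ^ n ^ 2` by `ω ^ n ^ 2` turns it into a relation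
`∑ j, (ω ^ j ^ 2 * c_j(n)) * (ω ^ (2 * j)) ^ n = 0` between exponential polynomials. A sequence
`p(n) * l ^ n` is a generalized eigenvector of the shift operator for the eigenvalue `l`, and
generalized eigenspaces for distinct eigenvalues are independent. If `ω` is not a root of unity,
the numbers `ω ^ (2 * j)` are distinct, so every `c_j` vanishes.
-/

open Polynomial fwdDiff

/-- A sequence is holonomic if it satisfies a linear recurrence of some order `d` with polynomial
coefficients `c 0, …, c d`, where `c d` is not the zero polynomial. -/
def IsHolonomic {R : Type*} [Semiring R] (g : ℕ → R) : Prop :=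
  ∃ (d : ℕ) (c : Fin (d + 1) → R[X]),
    c (Fin.last d) ≠ 0 ∧ ∀ n : ℕ, ∑ j : Fin (d + 1), (c j).eval (n : R) * g (n + j) = 0

section Shift

variable {R : Type*} [CommRing R]

variable (R) in
/-- The left shift `f ↦ (n ↦ f (n + 1))` on sequences, as a linear endomorphism. -/
def sequenceShift : Module.End R (ℕ → R) :=
  LinearMap.funLeft R R (· + 1)

theorem sequenceShift_sub_smul_apply_mul_pow (l : R) (g : R → R) :
    (sequenceShift R - l • 1) (fun n ↦ g n * l ^ n) = l • fun n : ℕ ↦ Δ_[1] g n * l ^ n := by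
  funext n
  simp only [sequenceShift, fwdDiff, LinearMap.sub_apply, LinearMap.smul_apply,
    LinearMap.funLeft_apply, Module.End.one_apply, Pi.sub_apply, Pi.smul_apply, smul_eq_mul,
    Nat.cast_succ]
  ring

theorem sequenceShift_sub_smul_pow_apply_mul_pow (l : R) (k : ℕ) (g : R → R) :
    ((sequenceShift R - l • 1) ^ k) (fun n ↦ g n * l ^ n) =
      l ^ k • fun n : ℕ ↦ (Δ_[1])^[k] g n * l ^ n := by
  induction k generalizing g with
  | zero => simp
  | succ k ih =>
    rw [pow_succ, Module.End.mul_apply, sequenceShift_sub_smul_apply_mul_pow, map_smul, ih,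
      smul_smul, ← pow_succ', Function.iterate_succ_apply]

theorem eval_mul_pow_mem_maxGenEigenspace_sequenceShift (l : R) (p : R[X]) :
    (fun n : ℕ ↦ p.eval (n : R) * l ^ n) ∈ (sequenceShift R).maxGenEigenspace l := by
  rw [Module.End.mem_maxGenEigenspace]
  refine ⟨p.natDegree + 1, ?_⟩
  rw [sequenceShift_sub_smul_pow_apply_mul_pow l _ (p.eval ·),
    p.fwdDiff_iter_degree_add_one_eq_zero]
  simp only [Pi.zero_apply, zero_mul]
  exact smul_zero _

end Shift

theorem pow_right_injective_of_not_isOfFinOrder {M : Type*} [MonoidWithZero M]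
    [IsLeftCancelMulZero M] {x : M} (hx₀ : x ≠ 0) (hx : ¬IsOfFinOrder x) :
    Function.Injective (x ^ · : ℕ → M) := by
  intro a b hab
  wlog hle : a ≤ b generalizing a b
  · exact (this hab.symm (le_of_not_ge hle)).symm
  obtain ⟨k, rfl⟩ := Nat.exists_eq_add_of_le hle
  have hk : x ^ k = 1 := by
    apply (mul_eq_left₀ (pow_ne_zero a hx₀)).mp
    rw [← pow_add]
    exact hab.symm
  by_contra hne
  exact hx (isOfFinOrder_iff_pow_eq_one.mpr ⟨k, by lia, hk⟩)

section CharZero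

variable {R : Type*} [CommRing R] [IsDomain R] [CharZero R]

theorem eq_zero_of_forall_eval_natCast_eq_zero {p : R[X]} (h : ∀ n : ℕ, p.eval (n : R) = 0) :
    p = 0 := by
  refine p.eq_zero_of_infinite_isRoot ((Set.infinite_range_of_injective Nat.cast_injective).mono ?_)
  rintro _ ⟨n, rfl⟩
  exact h n

theorem eq_zero_of_sum_eval_mul_pow_eq_zero {ι : Type*} [Fintype ι] {l : ι → R} {p : ι → R[X]}
    (hl₀ : ∀ i, l i ≠ 0) (hl : Function.Injective l)
    (h : ∀ n : ℕ, ∑ i, (p i).eval (n : R) * l i ^ n = 0) (i : ι) : p i = 0 := by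
  have indep := (sequenceShift R).independent_maxGenEigenspace.comp hl
  rw [iSupIndep_iff_finsetSum_eq_zero_imp_eq_zero] at indep
  have summand_eq_zero : (fun n : ℕ ↦ (p i).eval (n : R) * l i ^ n) = 0 :=
    indep Finset.univ (fun i n ↦ (p i).eval (n : R) * l i ^ n)
      (fun i _ ↦ eval_mul_pow_mem_maxGenEigenspace_sequenceShift (l i) (p i))
      (by ext n; simpa using h n) i (Finset.mem_univ i)
  refine eq_zero_of_forall_eval_natCast_eq_zero fun n ↦ ?_
  exact (mul_eq_zero_iff_right (pow_ne_zero n (hl₀ i))).mp (congrFun summand_eq_zero n)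

theorem rootOfUnity_of_holonomic_omega_pow_sq_general {ω : R} (hω : ω ≠ 0)
    (h : IsHolonomic fun n ↦ ω ^ n ^ 2) : IsOfFinOrder ω := by
  obtain ⟨d, c, hc, hrec⟩ := h
  by_contra hfin
  have base_injective : Function.Injective fun j : Fin (d + 1) ↦ (ω ^ 2) ^ (j : ℕ) :=
    (pow_right_injective_of_not_isOfFinOrder (pow_ne_zero 2 hω)
      (mt (·.of_pow two_ne_zero) hfin)).comp Fin.val_injective
  have relation (n : ℕ) :
      ∑ j : Fin (d + 1),
        (C (ω ^ (j : ℕ) ^ 2) * c j).eval (n : R) * ((ω ^ 2) ^ (j : ℕ)) ^ n = 0 := by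
    apply mul_left_cancel₀ (pow_ne_zero (n ^ 2) hω)
    rw [mul_zero, ← hrec n, Finset.mul_sum]
    refine Finset.sum_congr rfl fun j _ ↦ ?_
    rw [eval_mul, eval_C]
    ring
  have base_ne_zero (j : Fin (d + 1)) : (ω ^ 2) ^ (j : ℕ) ≠ 0 := pow_ne_zero _ (pow_ne_zero 2 hω)
  have last_eq_zero :=
    eq_zero_of_sum_eval_mul_pow_eq_zero base_ne_zero base_injective relation (Fin.last d)
  exact mul_ne_zero (C_ne_zero.mpr (pow_ne_zero _ hω)) hc last_eq_zero

end CharZero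

/-- If `ω ≠ 0` and the sequence `(ω^{n²})` is holonomic, i.e. there are `d ≥ 0` and
polynomials `c_0, …, c_d ∈ ℂ[x]` with `c_d ≠ 0` and
`c_d(n) ω^{(n+d)²} + ⋯ + c_0(n) ω^{n²} = 0` for all `n`, then `ω` is a root of
unity: `ω^m = 1` for some `m ≥ 1`. -/
theorem rootOfUnity_of_holonomic_omega_pow_sq (ω : ℂ) (hω : ω ≠ 0)
    (h : ∃ (d : ℕ) (c : Fin (d + 1) → Polynomial ℂ),
      c (Fin.last d) ≠ 0 ∧
      ∀ n : ℕ, ∑ j : Fin (d + 1), (c j).eval (n : ℂ) * ω ^ ((n + (j : ℕ)) ^ 2) = 0) :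
    ∃ m : ℕ, 1 ≤ m ∧ ω ^ m = 1 :=
  isOfFinOrder_iff_pow_eq_one.mp (rootOfUnity_of_holonomic_omega_pow_sq_general hω h)
end

section
/- Let N ≥ 1 and let ζ = e^{2πi/N} ∈ ℂ. Let a_1, …, a_r be natural numbers written as a_i = A_i·N + α_i with A_i, α_i ∈ ℕ and 0 ≤ α_i < N, and set a = a_1 + ⋯ + a_r and α = α_1 + ⋯ + α_r. Then the evaluation of the Gaussian multinomial polynomial satisfies G(a; a_1,…,a_r)(ζ) = ((A_1+⋯+A_r)! / (A_1!⋯A_r!)) · G(α; α_1,…,α_r)(ζ). -/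
/-!
Write `(q; q)_n = ∏_{j=1}^n (1 - q^j)`. In `(q; q)_{MN + m}` the factors with `N ∣ j` are
`1 - q^{(k+1)N} = (1 - q^N)(1 + q^N + ⋯ + q^{kN})` for `k < M`, so `(1 - q^N)^M` splits off.
At a primitive `N`-th root of unity `ζ` the remaining cofactor takes the value
`(ζ; ζ)_{N-1}^M · M! · (ζ; ζ)_m`: the geometric sums become `1, 2, …, M`, and the other factors
are `N`-periodic in `j`. In the Gaussian multinomial the powers of `1 - q^N` cancel, since
numerator and denominator contain equally many; evaluating the cofactors at `ζ` then separates
the factorials of the `A_i` from the multinomial in the `α_i`, whose denominators `(ζ; ζ)_{α_i}`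
are nonzero because `α_i < N`.
-/

open Finset Polynomial
open scoped Nat

section CommRing

variable {F R S : Type*} [CommRing R] [CommRing S]

/-- The `q`-Pochhammer symbol `(a; q)_n = (1 - a)(1 - aq)⋯(1 - aq^{n-1})`. The numerators and
denominators of Gaussian multinomials are the instances `(q; q)_n`. -/
def qPochhammer (a q : R) (n : ℕ) : R :=
  ∏ j ∈ range n, (1 - a * q ^ j)

lemma qPochhammer_succ (a q : R) (n : ℕ) :
    qPochhammer a q (n + 1) = qPochhammer a q n * (1 - a * q ^ n) :=
  prod_range_succ ..

lemma qPochhammer_add (a q : R) (m n : ℕ) :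
    qPochhammer a q (m + n) = qPochhammer a q m * qPochhammer (a * q ^ m) q n := by
  simp only [qPochhammer, prod_range_add, pow_add, mul_assoc]

lemma qPochhammer_self (q : R) (n : ℕ) :
    qPochhammer q q n = ∏ j ∈ range n, (1 - q ^ (j + 1)) := by
  simp only [qPochhammer, pow_succ']

lemma map_qPochhammer [FunLike F R S] [RingHomClass F R S] (f : F) (a q : R) (n : ℕ) :
    f (qPochhammer a q n) = qPochhammer (f a) (f q) n := by
  simp [qPochhammer]

/-- The cofactor of `(1 - q ^ N) ^ M` in `(q; q)_{MN + m}`, for `N ≠ 0`. It is given by an explicit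
product so that it can also be evaluated where `1 - q ^ N` vanishes. -/
def qPochhammerCofactor (q : R) (N M m : ℕ) : R :=
  (∏ k ∈ range M, qPochhammer (q * q ^ (k * N)) q (N - 1) * ∑ i ∈ range (k + 1), (q ^ N) ^ i) *
    qPochhammer (q * q ^ (M * N)) q m

lemma map_qPochhammerCofactor [FunLike F R S] [RingHomClass F R S] (f : F) (q : R) (N M m : ℕ) :
    f (qPochhammerCofactor q N M m) = qPochhammerCofactor (f q) N M m := by
  simp [qPochhammerCofactor, map_qPochhammer]

lemma qPochhammer_block (q : R) {N : ℕ} (hN : N ≠ 0) (k : ℕ) :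
    qPochhammer (q * q ^ (k * N)) q N =
      (1 - q ^ N) *
        (qPochhammer (q * q ^ (k * N)) q (N - 1) * ∑ i ∈ range (k + 1), (q ^ N) ^ i) := by
  obtain ⟨n, rfl⟩ := Nat.exists_eq_succ_of_ne_zero hN
  have last_factor : 1 - q * q ^ (k * (n + 1)) * q ^ n =
      (1 - q ^ (n + 1)) * ∑ i ∈ range (k + 1), (q ^ (n + 1)) ^ i := by
    rw [mul_neg_geom_sum]
    ring
  rw [Nat.succ_eq_add_one, add_tsub_cancel_right, qPochhammer_succ, last_factor, mul_left_comm]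

lemma qPochhammer_mul_add (q : R) {N : ℕ} (hN : N ≠ 0) (M m : ℕ) :
    qPochhammer q q (M * N + m) = (1 - q ^ N) ^ M * qPochhammerCofactor q N M m := by
  have blocks : qPochhammer q q (M * N) = ∏ k ∈ range M, qPochhammer (q * q ^ (k * N)) q N := by
    induction M with
    | zero => simp [qPochhammer]
    | succ M ih => rw [Nat.succ_mul, qPochhammer_add, ih, prod_range_succ]
  rw [qPochhammer_add, blocks]
  simp only [qPochhammer_block q hN, prod_mul_distrib (f := fun _ ↦ 1 - q ^ N), prod_const,
    card_range, qPochhammerCofactor, mul_assoc]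

lemma qPochhammerCofactor_of_pow_eq_one {q : R} {N : ℕ} (hq : q ^ N = 1) (M m : ℕ) :
    qPochhammerCofactor q N M m = qPochhammer q q (N - 1) ^ M * M ! * qPochhammer q q m := by
  simp [qPochhammerCofactor, pow_mul', hq, prod_mul_distrib, ← prod_range_add_one_eq_factorial]

lemma qPochhammer_self_ne_zero [IsDomain R] {ζ : R} {N m : ℕ} (hζ : IsPrimitiveRoot ζ N)
    (hm : m < N) : qPochhammer ζ ζ m ≠ 0 := by
  rw [qPochhammer_self, prod_ne_zero_iff]
  intro j hj
  have hjm : j < m := mem_range.mp hj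
  exact sub_ne_zero.mpr (hζ.pow_ne_one_of_pos_of_lt j.succ_ne_zero (by lia)).symm

variable {ι : Type*} {s : Finset ι}

/-- `G` is a Gaussian multinomial coefficient with parts `a i` for `i ∈ s`, at the base `q`. The
defining quotient is stated with cleared denominators, which determines `G` when `q` is an
indeterminate, but not when a denominator is a zero divisor. -/
def IsGaussMultinomial (q : R) (s : Finset ι) (a : ι → ℕ) (G : R) : Prop :=
  G * ∏ i ∈ s, qPochhammer q q (a i) = qPochhammer q q (∑ i ∈ s, a i)

lemma IsGaussMultinomial.map [FunLike F R S] [RingHomClass F R S] (f : F) {q G : R}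
    {a : ι → ℕ} (hG : IsGaussMultinomial q s a G) : IsGaussMultinomial (f q) s a (f G) := by
  simpa [IsGaussMultinomial, map_qPochhammer] using congrArg f hG

lemma IsGaussMultinomial.mul_prod_qPochhammerCofactor {q G : R} {N : ℕ} {A α : ι → ℕ}
    (hN : N ≠ 0) (hq : IsLeftRegular (1 - q ^ N))
    (hG : IsGaussMultinomial q s (fun i ↦ A i * N + α i) G) :
    G * ∏ i ∈ s, qPochhammerCofactor q N (A i) (α i) =
      qPochhammerCofactor q N (∑ i ∈ s, A i) (∑ i ∈ s, α i) := by
  apply hq.pow (∑ i ∈ s, A i)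
  simpa only [IsGaussMultinomial, sum_add_distrib, ← sum_mul, qPochhammer_mul_add q hN,
    prod_mul_distrib, prod_pow_eq_pow_sum, mul_left_comm G] using hG

lemma isLeftRegular_one_sub_X_pow {N : ℕ} (hN : N ≠ 0) : IsLeftRegular (1 - X ^ N : R[X]) := by
  apply IsLeftRegular.of_mul (a := -1)
  simpa using (monic_X_pow_sub_C (1 : R) hN).isRegular.left

end CommRing

theorem gauss_multinomial_at_root_of_unity_general
    {R K ι : Type*} [CommRing R] [CommRing K] [IsDomain K] [CharZero K] [Algebra R K]
    {s : Finset ι} {N : ℕ} (hN : N ≠ 0) {A α : ι → ℕ} (hα : ∀ i ∈ s, α i < N) {G Gα : R[X]}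
    (hG : IsGaussMultinomial X s (fun i ↦ A i * N + α i) G)
    (hGα : IsGaussMultinomial X s α Gα) {ζ : K} (hζ : IsPrimitiveRoot ζ N) :
    aeval ζ G = (Nat.multinomial s A : K) * aeval ζ Gα := by
  set c := qPochhammer ζ ζ (N - 1)
  have hc : c ^ ∑ i ∈ s, A i ≠ 0 := pow_ne_zero _ (qPochhammer_self_ne_zero hζ (by lia))
  have hfact : ∏ i ∈ s, ((A i)! : K) ≠ 0 :=
    prod_ne_zero_iff.mpr fun i _ ↦ Nat.cast_ne_zero.mpr (Nat.factorial_ne_zero _)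
  have hden : ∏ i ∈ s, qPochhammer ζ ζ (α i) ≠ 0 :=
    prod_ne_zero_iff.mpr fun i hi ↦ qPochhammer_self_ne_zero hζ (hα i hi)
  have hcofactor : aeval ζ G * ∏ i ∈ s, qPochhammerCofactor ζ N (A i) (α i) =
      qPochhammerCofactor ζ N (∑ i ∈ s, A i) (∑ i ∈ s, α i) := by
    simpa [map_qPochhammerCofactor] using congrArg (aeval ζ)
      (hG.mul_prod_qPochhammerCofactor hN (isLeftRegular_one_sub_X_pow hN))
  have hGαζ : aeval ζ Gα * ∏ i ∈ s, qPochhammer ζ ζ (α i) = qPochhammer ζ ζ (∑ i ∈ s, α i) := by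
    simpa only [IsGaussMultinomial, aeval_X] using hGα.map (aeval ζ)
  have hmultinomial : (∏ i ∈ s, ((A i)! : K)) * Nat.multinomial s A = (∑ i ∈ s, A i)! := by
    exact_mod_cast Nat.multinomial_spec s A
  simp only [qPochhammerCofactor_of_pow_eq_one hζ.pow_eq_one, prod_mul_distrib,
    prod_pow_eq_pow_sum, ← hmultinomial, ← hGαζ] at hcofactor
  apply mul_right_cancel₀ (mul_ne_zero (mul_ne_zero hc hfact) hden)
  linear_combination hcofactor

/-- Evaluation at `ζ = e^{2πi/N}` of the Gaussian multinomial: if `a_i = A_i N + α_i`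
with `0 ≤ α_i < N`, and `G`, `Gα` are the Gaussian multinomial polynomials,
characterized by `G(x) ∏_i ∏_{j=1}^{a_i} (1-x^j) = ∏_{j=1}^{a} (1-x^j)` (and similarly
for `Gα` with the `α_i`), then
`G(ζ) = ((A_1 + ⋯ + A_r)! / (A_1! ⋯ A_r!)) · Gα(ζ)`. -/
theorem gauss_multinomial_at_root_of_unity
    (N : ℕ) (hN : 1 ≤ N) (r : ℕ) (A α : Fin r → ℕ) (hα : ∀ i, α i < N)
    (a : Fin r → ℕ) (ha : ∀ i, a i = A i * N + α i)
    (G Gα : Polynomial ℤ)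
    (hG : G * ∏ i, ∏ j ∈ Finset.range (a i), (1 - Polynomial.X ^ (j + 1)) =
      ∏ j ∈ Finset.range (∑ i, a i), (1 - Polynomial.X ^ (j + 1)))
    (hGα : Gα * ∏ i, ∏ j ∈ Finset.range (α i), (1 - Polynomial.X ^ (j + 1)) =
      ∏ j ∈ Finset.range (∑ i, α i), (1 - Polynomial.X ^ (j + 1)))
    (ζ : ℂ) (hζ : ζ = Complex.exp (2 * Real.pi * Complex.I / N)) :
    Polynomial.aeval ζ G =
      (Nat.multinomial Finset.univ A : ℂ) * Polynomial.aeval ζ Gα := by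
  obtain rfl : a = fun i ↦ A i * N + α i := funext ha
  have hN₀ : N ≠ 0 := Nat.ne_of_gt hN
  simp only [← qPochhammer_self] at hG hGα
  exact gauss_multinomial_at_root_of_unity_general hN₀ (fun i _ ↦ hα i) hG hGα
    (hζ ▸ Complex.isPrimitiveRoot_exp N hN₀)
end
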